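/- Let r ≥ 2 be an integer and λ_1,…,λ_r, α_1,…,α_r ∈ [0,1), and set μ_2 := λ_1+λ_2. For every (s_1,…,s_r) ∈ U_r, all multiple Lerch zeta values below are given by absolutely convergent series, both infinite sums over k converge absolutely, and the following identity holds: e(λ_1) ∑_{k≥−1} (s_1)_k (α_2−α_1)^{k+1} L_{r−1}(μ_2, λ_3,…,λ_r; α_2,…,α_r; s_1+s_2+k+1, s_3,…,s_r) = (1 − e(λ_1)) L_r(λ_1,…,λ_r; α_1,…,α_r; s_1,…,s_r) + ∑_{k≥0} (s_1)_k L_r(λ_1,…,λ_r; α_1,…,α_r; s_1+k+1, s_2,…,s_r). -/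

import Mathlib

/-!
Both sides equal `e(λ_1) D`, where `D` is the sum of the terms of `L_r` over the diagonal tuples
`n_1 = n_2 > n_3 > ⋯ > n_r > 0`.

Everything rests on the binomial series `∑_{k ≥ -1} (s)_k y^{k+1} = (1-y)^{-s}` for `|y| < 1`
(`hasSum_binCoeff`). With `y = (α_2-α_1)/(n_2+α_2)` it expands `(n_2+α_1)^{-s_1}` in powers of
`n_2+α_2`, so the left side is `e(λ_1) D` (`hasSum_contract`). With `y = 1/(n_1+α_1)` it gives
`∑_{k ≥ 0} (s_1)_k (n_1+α_1)^{-s_1-k-1} = (n_1-1+α_1)^{-s_1} - (n_1+α_1)^{-s_1}`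
(`hasSum_update`). In the sum of the first of these two terms, put `n_1 - 1` in place of `n_1`: it
then runs over `n_1 ≥ n_2 > ⋯ > n_r > 0` (`shiftUp_bijective`), so it equals `e(λ_1)(L_r + D)`, and
the right side is `(1 - e(λ_1)) L_r + e(λ_1)(L_r + D) - L_r = e(λ_1) D`.

The interchanges of summation are legitimate because the double series are dominated by products
of a convergent binomial series and an absolutely convergent Lerch series
(`summable_update_uncurry`, `summable_contract_uncurry`). Absolute convergence of the Lerch series
on `U_r` is `summable_lerch`.
-/

open Complex

/-- `e(a) = e^{2πia}`. -/
noncomputable def eR (a : ℝ) : ℂ := Complex.exp (2 * Real.pi * Complex.I * a)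

/-- For a real `b > 0` and `z ∈ ℂ`, `b^z := exp (z log b)` (real logarithm). -/
noncomputable def rpowC (b : ℝ) (z : ℂ) : ℂ := Complex.exp (z * Real.log b)

/-- Strictly decreasing tuples of positive integers `n_1 > n_2 > ⋯ > n_r > 0`. -/
def DTuple (r : ℕ) : Type := {n : Fin r → ℕ // StrictAnti n ∧ ∀ i, 0 < n i}

/-- The term `e(λ_1 n_1)⋯e(λ_r n_r) / ((n_1+α_1)^{s_1}⋯(n_r+α_r)^{s_r})`. -/
noncomputable def lerchTerm {r : ℕ} (lam al : Fin r → ℝ) (s : Fin r → ℂ)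
    (n : Fin r → ℕ) : ℂ :=
  (∏ i, eR (lam i * n i)) / ∏ i, rpowC ((n i : ℝ) + al i) (s i)

/-- The multiple Lerch zeta function (as a sum over strictly decreasing tuples). -/
noncomputable def multipleLerch {r : ℕ} (lam al : Fin r → ℝ) (s : Fin r → ℂ) : ℂ :=
  ∑' n : DTuple r, lerchTerm lam al s n.1

/-- The term `(n_1+α_1)^{-s_1}⋯(n_r+α_r)^{-s_r}`. -/
noncomputable def hzTerm {r : ℕ} (al : Fin r → ℝ) (s : Fin r → ℂ) (n : Fin r → ℕ) : ℂ :=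
  ∏ i, rpowC ((n i : ℝ) + al i) (-(s i))

/-- The multiple Hurwitz zeta function (as a sum over strictly decreasing tuples). -/
noncomputable def multipleHurwitz {r : ℕ} (al : Fin r → ℝ) (s : Fin r → ℂ) : ℂ :=
  ∑' n : DTuple r, hzTerm al s n.1

/-- `U_r(m) = {s ∈ ℂ^r : Re(s_1+⋯+s_i) > i − m for 1 ≤ i ≤ r}` (0-based indexing). -/
def Ur (r : ℕ) (m : ℤ) : Set (Fin r → ℂ) :=
  {s | ∀ i : Fin r, ((i : ℕ) + 1 - m : ℝ) < (∑ j ∈ Finset.Iic i, s j).re}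

/-- `(s)_k = s(s+1)⋯(s+k)/(k+1)!` for `k ≥ 0` and `(s)_k = 1` for `k < 0`. -/
noncomputable def pochZ (s : ℂ) (k : ℤ) : ℂ :=
  if 0 ≤ k then (∏ j ∈ Finset.range (k.toNat + 1), (s + j)) / (Nat.factorial (k.toNat + 1))
  else 1

/-- The hyperplane `H_{i,k} : s_1 + ⋯ + s_i = i − k` (0-based: `i` here is paper's `i−1`). -/
def Hplane (r : ℕ) (i : Fin r) (k : ℕ) : Set (Fin r → ℂ) :=
  {s | ∑ j ∈ Finset.Iic i, s j = ((i : ℕ) + 1 : ℂ) - k}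

/-- The union of the hyperplanes `H_{i,k}` for `(i,k)` satisfying the predicate `P`. -/
def polarSet {r : ℕ} (P : Fin r → ℕ → Prop) : Set (Fin r → ℂ) :=
  {s | ∃ i k, P i k ∧ s ∈ Hplane r i k}

/-- `F` has (at most) simple poles along the hyperplanes `H_{i,k}`, `(i,k) ∈ P`:
around every point `p`, multiplying `F` by the (finitely many) linear factors
`s_1+⋯+s_i−i+k` of the members of `P` passing through `p` yields a function
that extends analytically to a neighbourhood of `p`. -/
def SimplePolesAlong {r : ℕ} (P : Fin r → ℕ → Prop) (F : (Fin r → ℂ) → ℂ) : Prop :=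
  ∀ p : Fin r → ℂ, ∀ T : Finset (Fin r × ℕ),
    (∀ i k, (i, k) ∈ T ↔ (P i k ∧ p ∈ Hplane r i k)) →
    ∃ (V : Set (Fin r → ℂ)) (G : (Fin r → ℂ) → ℂ),
      IsOpen V ∧ p ∈ V ∧ AnalyticOnNhd ℂ G V ∧
      ∀ s ∈ V, s ∉ polarSet P →
        G s = (∏ q ∈ T, ((∑ j ∈ Finset.Iic q.1, s j) - ((q.1 : ℕ) + 1 : ℂ) + (q.2 : ℂ))) * F s

/-- From `(s_1,…,s_r)` (depth `r = r'+2`) and `c ∈ ℂ`, the depth-`(r−1)` tuple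
`(s_1+s_2+c, s_3, …, s_r)`. -/
noncomputable def contractArgs {r : ℕ} (s : Fin (r + 2) → ℂ) (c : ℂ) : Fin (r + 1) → ℂ :=
  fun i => if i = 0 then s 0 + s 1 + c else s i.succ

/-- From `(λ_1,…,λ_r)` (depth `r = r'+2`), the depth-`(r−1)` tuple `(λ_1+λ_2, λ_3,…,λ_r)`. -/
def contractLam {r : ℕ} (lam : Fin (r + 2) → ℝ) : Fin (r + 1) → ℝ :=
  fun i => if i = 0 then lam 0 + lam 1 else lam i.succ

/-! ### Powers and the binomial series -/

/-- The coefficient `s(s+1)⋯(s+k-1)/k!` of `y^k` in the binomial series of `(1-y)^{-s}`. In the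
notation `(s)_k` this is `(s)_{k-1}`: the index is shifted so that it runs over `ℕ`. -/
noncomputable def binCoeff (s : ℂ) (k : ℕ) : ℂ :=
  (∏ j ∈ Finset.range k, (s + j)) / (Nat.factorial k)

lemma pochZ_eq (s : ℂ) (k : ℕ) : pochZ s ((k : ℤ) - 1) = binCoeff s k := by
  rcases k with _ | k
  · simp [pochZ, binCoeff]
  · have : ((k + 1 : ℕ) : ℤ) - 1 = k := by push_cast; ring
    rw [this]
    simp [pochZ, binCoeff]

lemma choose_eq_binCoeff (s : ℂ) (k : ℕ) : Ring.choose (s + k - 1) k = binCoeff s k := by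
  have h := Ring.factorial_nsmul_multichoose_eq_ascPochhammer s k
  rw [Ring.multichoose_eq, Polynomial.ascPochhammer_smeval_eq_eval, nsmul_eq_mul] at h
  have h2 : (ascPochhammer ℂ k).eval s = ∏ j ∈ Finset.range k, (s + j) := by
    clear h
    induction k with
    | zero => simp
    | succ n ih => rw [ascPochhammer_succ_eval, ih, Finset.prod_range_succ]
  rw [binCoeff, ← h2, ← h]
  have : (Nat.factorial k : ℂ) ≠ 0 := by exact_mod_cast Nat.factorial_ne_zero k
  field_simp

lemma rpowC_ne (b : ℝ) (z : ℂ) : rpowC b z ≠ 0 := Complex.exp_ne_zero _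

lemma rpowC_add (b : ℝ) (z w : ℂ) : rpowC b (z + w) = rpowC b z * rpowC b w := by
  simp only [rpowC, ← Complex.exp_add]; ring_nf

lemma rpowC_nat {b : ℝ} (hb : 0 < b) (k : ℕ) : rpowC b k = (b : ℂ) ^ k := by
  rw [rpowC, Complex.exp_nat_mul, ← Complex.ofReal_exp, Real.exp_log hb]

lemma rpowC_mul {a b : ℝ} (ha : 0 < a) (hb : 0 < b) (z : ℂ) :
    rpowC (a * b) z = rpowC a z * rpowC b z := by
  simp only [rpowC, ← Complex.exp_add, Real.log_mul ha.ne' hb.ne']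
  push_cast; ring_nf

lemma norm_rpowC {b : ℝ} (hb : 0 < b) (z : ℂ) : ‖rpowC b z‖ = b ^ z.re := by
  rw [rpowC, Complex.norm_exp, Real.rpow_def_of_pos hb]
  simp [mul_comm]

lemma rpowC_eq_cpow {b : ℝ} (hb : 0 < b) (z : ℂ) : rpowC b z = (b : ℂ) ^ z := by
  rw [rpowC, Complex.cpow_def_of_ne_zero (by exact_mod_cast hb.ne'), Complex.ofReal_log hb.le,
    mul_comm]

/-- The binomial series `∑ (s)_{k-1} y^k = (1-y)^{-s}`. -/
lemma hasSum_binCoeff (s : ℂ) {y : ℝ} (hy : |y| < 1) :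
    HasSum (fun k => binCoeff s k * (y : ℂ) ^ k) (1 / rpowC (1 - y) s) := by
  have h := (Complex.one_div_one_sub_cpow_hasFPowerSeriesOnBall_zero s).hasSum
    (y := (y : ℂ)) (by simpa [Metric.mem_eball, ← ofReal_norm] using hy)
  rw [rpowC_eq_cpow (b := 1 - y) (by linarith [(abs_lt.1 hy).2])]
  simpa [FormalMultilinearSeries.ofScalars_apply_eq, choose_eq_binCoeff, mul_comm] using h

lemma summable_norm_binCoeff (s : ℂ) {y : ℝ} (hy : |y| < 1) :
    Summable (fun k => ‖binCoeff s k‖ * |y| ^ k) := by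
  simpa using (hasSum_binCoeff s hy).summable.norm

lemma norm_eR (a : ℝ) : ‖eR a‖ = 1 := by
  have : (2 * Real.pi * Complex.I * a : ℂ) = ((2 * Real.pi * a : ℝ) : ℂ) * Complex.I := by
    push_cast; ring
  rw [eR, this, Complex.norm_exp_ofReal_mul_I]

lemma eR_add (a b : ℝ) : eR (a + b) = eR a * eR b := by
  simp only [eR, ← Complex.exp_add]; push_cast; ring_nf

/-! ### Absolute convergence on `U_r` -/

lemma summable_prod_pi {f : ℕ → ℝ} (hf : Summable f) (h0 : ∀ n, 0 ≤ f n) (r : ℕ) :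
    Summable (fun n : Fin r → ℕ => ∏ i, f (n i)) := by
  induction r with
  | zero => exact Summable.of_finite
  | succ r ih =>
    have h := hf.mul_of_nonneg ih h0 (fun n => Finset.prod_nonneg fun i _ => h0 _)
    refine ((Fin.consEquiv fun _ : Fin (r + 1) => ℕ).summable_iff).1 ?_
    refine h.congr fun x => ?_
    simp [Fin.prod_univ_succ, Fin.consEquiv]

/-- Summation by parts: weights with nonnegative partial sums, against a decreasing sequence,
give a sum bounded below by the total weight times the last value. -/
lemma abel_ineq (r : ℕ) : ∀ (d L : Fin (r + 1) → ℝ), Antitone L →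
    (∀ i, 0 ≤ ∑ j ∈ Finset.Iic i, d j) → (∑ i, d i) * L (Fin.last r) ≤ ∑ i, d i * L i := by
  induction r with
  | zero => intro d L _ _; simp
  | succ r ih =>
    intro d L hL hd
    have h := ih (fun i => d i.castSucc) (fun i => L i.castSucc)
      (fun i j hij => hL (Fin.castSucc_le_castSucc_iff.2 hij)) (fun i => by
        have := hd i.castSucc
        rwa [← Fin.map_castSuccEmb_Iic, Finset.sum_map] at this)
    have h1 := hd (Fin.last r).castSucc
    rw [← Fin.map_castSuccEmb_Iic, Finset.sum_map] at h1
    have hu : Finset.Iic (Fin.last r) = Finset.univ := by ext; simp [Fin.le_last]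
    rw [hu] at h1
    simp only [Fin.coe_castSuccEmb] at h1
    rw [Fin.sum_univ_castSucc, Fin.sum_univ_castSucc (fun i => d i * L i)]
    have h2 : L (Fin.last (r + 1)) ≤ L (Fin.last r).castSucc := hL (Fin.le_last _)
    nlinarith [mul_le_mul_of_nonneg_left h2 h1]

lemma norm_lerchTerm {r : ℕ} (lam al : Fin r → ℝ) (hal : ∀ i, al i ∈ Set.Ico (0 : ℝ) 1)
    (s : Fin r → ℂ) (n : DTuple r) :
    ‖lerchTerm lam al s n.1‖ = Real.exp (-∑ i, (s i).re * Real.log (n.1 i + al i)) := by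
  have hp : ∀ i, 0 < (n.1 i : ℝ) + al i := fun i =>
    add_pos_of_pos_of_nonneg (by exact_mod_cast n.2.2 i) (hal i).1
  rw [lerchTerm, norm_div, norm_prod, norm_prod, Real.exp_neg, Real.exp_sum]
  simp only [norm_eR, Finset.prod_const_one, one_div]
  congr 1
  refine Finset.prod_congr rfl fun i _ => ?_
  rw [norm_rpowC (hp i), Real.rpow_def_of_pos (hp i), mul_comm]

/-- The multiple Lerch series converges absolutely on `U_r`. If the partial sums of the `Re s_i`
are at least `i(1+ε)`, then `abel_ineq`, applied to `Re s_i - (1+ε)` and the decreasing numbers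
`log (n_i + α_i)`, bounds each term by `∏ n_i^{-(1+ε)}`, which is summable over all tuples.
The `lam i` are arbitrary reals, since `λ_1 + λ_2` may be at least `1`. -/
lemma summable_lerch (r : ℕ) (lam al : Fin (r + 1) → ℝ) (hal : ∀ i, al i ∈ Set.Ico (0 : ℝ) 1)
    (s : Fin (r + 1) → ℂ) (hs : s ∈ Ur (r + 1) 0) :
    Summable (fun n : DTuple (r + 1) => ‖lerchTerm lam al s n.1‖) := by
  -- `1 + ε` is the least of the averages `Re(s_1+⋯+s_i)/i`.
  obtain ⟨ε, hε, hle⟩ : ∃ ε : ℝ, 0 < ε ∧ ∀ i : Fin (r + 1),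
      ((i : ℕ) + 1) * (1 + ε) ≤ ∑ j ∈ Finset.Iic i, (s j).re := by
    obtain ⟨i₀, -, h⟩ := Finset.exists_min_image (Finset.univ : Finset (Fin (r + 1)))
      (fun i => (∑ j ∈ Finset.Iic i, (s j).re) / ((i : ℕ) + 1)) ⟨0, Finset.mem_univ _⟩
    refine ⟨(∑ j ∈ Finset.Iic i₀, (s j).re) / ((i₀ : ℕ) + 1) - 1, ?_, fun i => ?_⟩
    · have := hs i₀
      rw [sub_pos, lt_div_iff₀ (by positivity)]
      simpa using this
    · have := h i (Finset.mem_univ _)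
      rw [le_div_iff₀ (by positivity)] at this
      linarith
  have hf : Summable (fun n : ℕ => (n : ℝ) ^ (-(1 + ε))) :=
    Real.summable_nat_rpow.2 (by linarith)
  have hP := (summable_prod_pi hf (fun n => by positivity) (r + 1)).comp_injective
    (i := fun n : DTuple (r + 1) => n.1) Subtype.val_injective
  refine Summable.of_nonneg_of_le (fun _ => norm_nonneg _) (fun n => ?_) hP
  have hn : ∀ i, (1 : ℝ) ≤ n.1 i := fun i => by exact_mod_cast n.2.2 i
  have hx : ∀ i, (1 : ℝ) ≤ n.1 i + al i := fun i => by linarith [hn i, (hal i).1]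
  have hL : Antitone fun i => Real.log (n.1 i + al i) := by
    intro i j hij
    rcases hij.eq_or_lt with rfl | hij
    · exact le_rfl
    · refine Real.log_le_log (by linarith [hx j]) ?_
      have : (n.1 j : ℝ) + 1 ≤ n.1 i := by exact_mod_cast n.2.1 hij
      linarith [(hal j).2, (hal i).1]
  have hd : ∀ i, 0 ≤ ∑ j ∈ Finset.Iic i, ((s j).re - (1 + ε)) := fun i => by
    rw [Finset.sum_sub_distrib, Finset.sum_const, Fin.card_Iic, nsmul_eq_mul]
    have := hle i
    push_cast
    linarith
  have key := abel_ineq r (fun i => (s i).re - (1 + ε)) _ hL hd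
  have hlast : 0 ≤ (∑ i, ((s i).re - (1 + ε))) * Real.log (n.1 (Fin.last r) + al (Fin.last r)) := by
    refine mul_nonneg ?_ (Real.log_nonneg (hx _))
    have := hd (Fin.last r)
    rwa [show Finset.Iic (Fin.last r) = Finset.univ by ext; simp [Fin.le_last]] at this
  simp only [sub_mul, Finset.sum_sub_distrib] at key hlast
  rw [norm_lerchTerm lam al hal]
  calc Real.exp (-∑ i, (s i).re * Real.log (n.1 i + al i))
      ≤ Real.exp (∑ i, Real.log (n.1 i) * -(1 + ε)) := by
        refine Real.exp_le_exp.2 ?_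
        have h3 : ∑ i, (1 + ε) * Real.log (n.1 i) ≤ ∑ i, (1 + ε) * Real.log (n.1 i + al i) := by
          refine Finset.sum_le_sum fun i _ => mul_le_mul_of_nonneg_left ?_ (by linarith)
          exact Real.log_le_log (by linarith [hn i]) (by linarith [(hal i).1])
        have h4 : ∑ i, Real.log (n.1 i) * -(1 + ε) = -∑ i, (1 + ε) * Real.log (n.1 i) := by
          rw [← Finset.sum_neg_distrib]; exact Finset.sum_congr rfl fun i _ => by ring
        rw [h4]
        linarith
    _ = _ := by
        rw [Real.exp_sum]
        refine Finset.prod_congr rfl fun i _ => ?_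
        rw [Real.rpow_def_of_pos (by linarith [hn i])]

lemma sum_Iic_zero {r : ℕ} (s : Fin (r + 1) → ℂ) : ∑ j ∈ Finset.Iic 0, s j = s 0 := by
  rw [show Finset.Iic (0 : Fin (r + 1)) = {0} by ext; simp]; simp

lemma sum_Iic_succ {r : ℕ} (s : Fin (r + 1) → ℂ) (i : Fin r) :
    ∑ j ∈ Finset.Iic i.succ, s j = s 0 + ∑ j ∈ Finset.Iic i, s j.succ := by
  have h : ∀ {n : ℕ} (i : Fin n), Finset.Iic i = Finset.univ.filter (· ≤ i) := by
    intro n i; ext; simp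
  rw [h, h, Finset.sum_filter, Finset.sum_filter, Fin.sum_univ_succ]
  simp

lemma contract_mem {r : ℕ} {s : Fin (r + 2) → ℂ} (hs : s ∈ Ur (r + 2) 0) (k : ℕ) :
    contractArgs s k ∈ Ur (r + 1) 0 := by
  have key : ∀ i : Fin (r + 1), ∑ j ∈ Finset.Iic i, contractArgs s k j =
      ∑ j ∈ Finset.Iic i.succ, s j + k := by
    intro i
    rw [sum_Iic_succ]
    refine Fin.cases ?_ (fun i => ?_) i
    · rw [sum_Iic_zero, sum_Iic_zero]; simp [contractArgs]
    · rw [sum_Iic_succ, sum_Iic_succ]; simp [contractArgs]; ring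
  intro i
  rw [key]
  have := hs i.succ
  have hk : (0 : ℝ) ≤ k := k.cast_nonneg
  simp only [Complex.add_re, Complex.natCast_re, Fin.val_succ] at this ⊢
  push_cast at this ⊢
  linarith

lemma update_mem {r : ℕ} {s : Fin (r + 2) → ℂ} (hs : s ∈ Ur (r + 2) 0) (k : ℕ) :
    Function.update s 0 (s 0 + k + 1) ∈ Ur (r + 2) 0 := by
  have key : ∀ i : Fin (r + 2), ∑ j ∈ Finset.Iic i, Function.update s 0 (s 0 + k + 1) j =
      ∑ j ∈ Finset.Iic i, s j + k + 1 := by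
    intro i
    refine Fin.cases ?_ (fun i => ?_) i
    · rw [sum_Iic_zero, sum_Iic_zero]; simp
    · rw [sum_Iic_succ, sum_Iic_succ]; simp; ring
  intro i
  rw [key]
  have := hs i
  have hk : (0 : ℝ) ≤ k := k.cast_nonneg
  simp only [Complex.add_re, Complex.natCast_re, Complex.one_re] at this ⊢
  push_cast at this ⊢
  linarith

/-! ### Dependence of a term on its leading variable -/

lemma lerchTerm_head {r : ℕ} (lam al : Fin (r + 1) → ℝ) (s : Fin (r + 1) → ℂ)
    (n : Fin (r + 1) → ℕ) :
    lerchTerm lam al s n = eR (lam 0 * n 0) / rpowC (n 0 + al 0) (s 0) *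
      lerchTerm (fun i => lam i.succ) (fun i => al i.succ) (fun i => s i.succ)
        (fun i => n i.succ) := by
  simp only [lerchTerm, Fin.prod_univ_succ]
  rw [mul_div_mul_comm]

lemma lerchTerm_update {r : ℕ} (lam al : Fin (r + 1) → ℝ) (s : Fin (r + 1) → ℂ)
    (n : Fin (r + 1) → ℕ) (k : ℕ) (hp : 0 < (n 0 : ℝ) + al 0) :
    lerchTerm lam al (Function.update s 0 (s 0 + k + 1)) n =
      lerchTerm lam al s n * ((((n 0 : ℝ) + al 0)⁻¹ : ℝ) : ℂ) ^ (k + 1) := by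
  rw [lerchTerm_head, lerchTerm_head lam al s]
  have : rpowC (n 0 + al 0) (s 0 + k + 1) = rpowC (n 0 + al 0) (s 0) *
      ((n 0 + al 0 : ℝ) : ℂ) ^ (k + 1) := by
    rw [← rpowC_nat hp, ← rpowC_add]; push_cast; ring_nf
  simp only [Function.update_self, this, ne_eq, Fin.succ_ne_zero, not_false_eq_true,
    Function.update_of_ne]
  rw [Complex.ofReal_inv, inv_pow]
  field_simp

lemma lerchTerm_contract {r : ℕ} (lam al : Fin (r + 2) → ℝ) (s : Fin (r + 2) → ℂ)
    (m : Fin (r + 1) → ℕ) (k : ℕ) (hp : 0 < (m 0 : ℝ) + al 1) :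
    lerchTerm (contractLam lam) (fun i => al i.succ) (contractArgs s k) m =
      lerchTerm (contractLam lam) (fun i => al i.succ) (contractArgs s (0 : ℕ)) m *
        ((((m 0 : ℝ) + al 1)⁻¹ : ℝ) : ℂ) ^ k := by
  rw [lerchTerm_head, lerchTerm_head _ _ (contractArgs s (0 : ℕ))]
  have : rpowC (m 0 + al 1) (s 0 + s 1 + k) = rpowC (m 0 + al 1) (s 0 + s 1 + (0 : ℕ)) *
      ((m 0 + al 1 : ℝ) : ℂ) ^ k := by
    rw [← rpowC_nat hp, ← rpowC_add]; push_cast; ring_nf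
  simp only [contractArgs, if_true, Fin.succ_ne_zero, if_false, Fin.succ_zero_eq_one, this]
  rw [Complex.ofReal_inv, inv_pow]
  field_simp

/-- The binomial series at `y = (α_2-α_1)/(m+α_2)`, where `1-y = (m+α_1)/(m+α_2)`: summing the
contracted terms over `k` gives the depth-`r` term on the diagonal `n_1 = n_2 = m`. -/
lemma hasSum_contract {r : ℕ} (lam al : Fin (r + 2) → ℝ) (hal : ∀ i, al i ∈ Set.Ico (0 : ℝ) 1)
    (s : Fin (r + 2) → ℂ) (m : DTuple (r + 1)) :
    HasSum (fun k : ℕ => binCoeff (s 0) k * (((al 1 - al 0) ^ k : ℝ) : ℂ) *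
      lerchTerm (contractLam lam) (fun i => al i.succ) (contractArgs s k) m.1)
      (lerchTerm lam al s (Fin.cons (m.1 0) m.1)) := by
  have h1 : (1 : ℝ) ≤ m.1 0 := by exact_mod_cast m.2.2 0
  have hp : 0 < (m.1 0 : ℝ) + al 1 := by linarith [(hal 1).1]
  have hq : 0 < (m.1 0 : ℝ) + al 0 := by linarith [(hal 0).1]
  have hy : |(al 1 - al 0) / (m.1 0 + al 1)| < 1 := by
    rw [abs_div, abs_of_pos hp, div_lt_one hp, abs_lt]
    constructor <;> linarith [(hal 0).1, (hal 1).1, (hal 0).2, (hal 1).2]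
  have h := (hasSum_binCoeff (s 0) hy).mul_right
    (lerchTerm (contractLam lam) (fun i => al i.succ) (contractArgs s (0 : ℕ)) m.1)
  convert! h using 1
  · ext k
    rw [lerchTerm_contract lam al s m.1 k hp]
    push_cast
    rw [div_eq_mul_inv, mul_pow]
    ring
  · have h2 : rpowC (m.1 0 + al 0) (s 0) =
        rpowC (1 - (al 1 - al 0) / (m.1 0 + al 1)) (s 0) * rpowC (m.1 0 + al 1) (s 0) := by
      rw [← rpowC_mul (by linarith [(abs_lt.1 hy).2]) hp]
      congr 1; field_simp; ring
    rw [lerchTerm_head, lerchTerm_head, lerchTerm_head (contractLam lam)]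
    simp only [contractArgs, contractLam, if_true, Fin.succ_ne_zero, if_false, Fin.cons_zero,
      Fin.cons_succ, Fin.succ_zero_eq_one, h2, Nat.cast_zero, add_zero, rpowC_add, add_mul, eR_add]
    have := rpowC_ne (1 - (al 1 - al 0) / (m.1 0 + al 1)) (s 0)
    have := rpowC_ne (m.1 0 + al 1) (s 0)
    have := rpowC_ne (m.1 0 + al 1) (s 1)
    have hc : (Fin.cons (m.1 0) m.1 : Fin (r + 2) → ℕ) 1 = m.1 0 := rfl
    rw [hc]
    generalize rpowC (1 - (al 1 - al 0) / (m.1 0 + al 1)) (s 0) = z at *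
    field_simp

/-- The binomial series at `y = 1/(n+1+α_1)`, without its constant term. Since
`1-y = (n+α_1)/(n+1+α_1)`, summing over `k` replaces the leading variable `n+1` by the difference
of the terms at `n` and at `n+1`; moving `e(λ_1(n+1))` to `e(λ_1 n)` costs a factor `e(λ_1)`. -/
lemma hasSum_update {r : ℕ} (lam al : Fin (r + 2) → ℝ) (hal : ∀ i, al i ∈ Set.Ico (0 : ℝ) 1)
    (s : Fin (r + 2) → ℂ) (n : Fin (r + 2) → ℕ) (hn : 1 ≤ n 0) :
    HasSum (fun k : ℕ => binCoeff (s 0) (k + 1) *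
      lerchTerm lam al (Function.update s 0 (s 0 + k + 1)) (Function.update n 0 (n 0 + 1)))
      (eR (lam 0) * lerchTerm lam al s n -
        lerchTerm lam al s (Function.update n 0 (n 0 + 1))) := by
  have h1 : (1 : ℝ) ≤ n 0 := by exact_mod_cast hn
  have hq : 0 < (n 0 : ℝ) + al 0 := by linarith [(hal 0).1]
  have hp : 0 < (n 0 : ℝ) + 1 + al 0 := by linarith
  have hy : |((n 0 : ℝ) + 1 + al 0)⁻¹| < 1 := by
    rw [abs_of_pos (inv_pos.2 hp)]
    exact inv_lt_one_of_one_lt₀ (by linarith [(hal 0).1])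
  have h := hasSum_binCoeff (s 0) hy
  rw [← hasSum_nat_add_iff' 1] at h
  replace h := h.mul_right (lerchTerm lam al s (Function.update n 0 (n 0 + 1)))
  convert! h using 1
  · ext k
    rw [lerchTerm_update _ _ _ _ _ (by simpa using hp)]
    simp only [Function.update_self, Nat.cast_add, Nat.cast_one]
    ring
  · have h2 : rpowC (n 0 + al 0) (s 0) =
        rpowC (1 - ((n 0 : ℝ) + 1 + al 0)⁻¹) (s 0) * rpowC (n 0 + 1 + al 0) (s 0) := by
      rw [← rpowC_mul (by linarith [(abs_lt.1 hy).2]) hp]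
      congr 1; field_simp; ring
    simp only [Finset.range_one, Finset.sum_singleton, pow_zero, mul_one]
    rw [sub_mul, show binCoeff (s 0) 0 = 1 by simp [binCoeff], one_mul]
    congr 1
    rw [lerchTerm_head, lerchTerm_head _ _ _ (Function.update n 0 (n 0 + 1))]
    simp only [Function.update_self, ne_eq, Fin.succ_ne_zero, not_false_eq_true,
      Function.update_of_ne, h2, Nat.cast_add, Nat.cast_one, mul_add, mul_one, eR_add]
    have := rpowC_ne (1 - ((n 0 : ℝ) + 1 + al 0)⁻¹) (s 0)
    have := rpowC_ne (n 0 + 1 + al 0) (s 0)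
    field_simp

/-! ### Lowering the leading variable by one -/

/-- A parametrization of the tuples `n_1 ≥ n_2 > ⋯ > n_r > 0`: those with `n_1 > n_2` are the
elements of `DTuple (r + 2)`, those with `n_1 = n_2` come from `DTuple (r + 1)` by repeating the
first entry. -/
def preShift {r : ℕ} : DTuple (r + 2) ⊕ DTuple (r + 1) → Fin (r + 2) → ℕ
  | .inl n => n.1
  | .inr m => Fin.cons (m.1 0) m.1

lemma mem_DTuple {r : ℕ} {n : Fin (r + 2) → ℕ} :
    (StrictAnti n ∧ ∀ i, 0 < n i) ↔ n 1 < n 0 ∧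
      (StrictAnti (fun i : Fin (r + 1) => n i.succ) ∧ ∀ i : Fin (r + 1), 0 < n i.succ) := by
  constructor
  · rintro ⟨h1, h2⟩
    exact ⟨h1 (by simp), fun i j hij => h1 (Fin.succ_lt_succ_iff.2 hij), fun i => h2 _⟩
  · rintro ⟨h0, h1, h2⟩
    refine ⟨?_, fun i => ?_⟩
    · refine Fin.strictAnti_iff_succ_lt.2 fun i => ?_
      refine Fin.cases ?_ (fun i => ?_) i
      · simpa using h0
      · exact h1 (Fin.castSucc_lt_succ (i := i))
    · refine Fin.cases (lt_of_le_of_lt (Nat.zero_le _) h0) h2 i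

lemma preShift_mem {r : ℕ} (p : DTuple (r + 2) ⊕ DTuple (r + 1)) :
    1 ≤ preShift p 0 ∧ preShift p 1 ≤ preShift p 0 ∧
      (StrictAnti (fun i : Fin (r + 1) => preShift p i.succ) ∧
        ∀ i : Fin (r + 1), 0 < preShift p i.succ) := by
  rcases p with n | m
  · have h := mem_DTuple.1 n.2
    exact ⟨n.2.2 0, h.1.le, h.2⟩
  · exact ⟨m.2.2 0, le_rfl, m.2⟩

/-- Raising `n_1` by one turns a tuple `n_1 ≥ n_2 > ⋯ > n_r > 0` into a strictly decreasing one. -/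
def shiftUp {r : ℕ} (p : DTuple (r + 2) ⊕ DTuple (r + 1)) : DTuple (r + 2) :=
  ⟨Function.update (preShift p) 0 (preShift p 0 + 1), mem_DTuple.2 (by
    obtain ⟨-, h1, h2⟩ := preShift_mem p
    refine ⟨?_, by simpa using h2⟩
    rw [Function.update_self, Function.update_of_ne (by simp)]
    omega)⟩

lemma shiftUp_bijective (r : ℕ) : Function.Bijective (shiftUp (r := r)) := by
  constructor
  · intro p q h
    have h' : Function.update (preShift p) 0 (preShift p 0 + 1) =
      Function.update (preShift q) 0 (preShift q 0 + 1) := congrArg Subtype.val h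
    have hpq : preShift p = preShift q := by
      funext i
      have := congrFun h' i
      by_cases hi : i = 0
      · subst hi; simpa using this
      · simpa [hi] using this
    rcases p with n | m <;> rcases q with n' | m'
    · exact congrArg _ (Subtype.ext hpq)
    · have h0 := (mem_DTuple.1 n.2).1
      have e0 : n.1 0 = m'.1 0 := congrFun hpq 0
      have e1 : n.1 1 = m'.1 0 := congrFun hpq 1
      omega
    · have h0 := (mem_DTuple.1 n'.2).1
      have e0 : m.1 0 = n'.1 0 := congrFun hpq 0
      have e1 : m.1 0 = n'.1 1 := congrFun hpq 1
      omega
    · refine congrArg _ (Subtype.ext (funext fun i => ?_))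
      exact congrFun hpq i.succ
  · intro n
    obtain ⟨h0, h1⟩ := mem_DTuple.1 n.2
    by_cases h : n.1 1 < n.1 0 - 1
    · refine ⟨.inl ⟨Function.update n.1 0 (n.1 0 - 1), mem_DTuple.2 ⟨?_, by simpa using h1⟩⟩, ?_⟩
      · rw [Function.update_self, Function.update_of_ne (by simp)]
        exact h
      · refine Subtype.ext (funext fun i => ?_)
        by_cases hi : i = 0
        · subst hi; simp [shiftUp, preShift]; omega
        · simp [shiftUp, preShift, hi]
    · refine ⟨.inr ⟨fun i => n.1 i.succ, h1⟩, ?_⟩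
      refine Subtype.ext (funext fun i => ?_)
      refine Fin.cases ?_ (fun i => ?_) i
      · simp [shiftUp, preShift]; omega
      · simp [shiftUp, preShift]

/-! ### Absolute convergence of the double sums -/

lemma summable_uncurry_of_le {ι : Type*} {F : ℕ → ι → ℂ} {a : ℕ → ℝ} {b : ι → ℝ}
    (ha : Summable a) (hb : Summable b) (ha0 : ∀ k, 0 ≤ a k) (hb0 : ∀ n, 0 ≤ b n)
    (h : ∀ k n, ‖F k n‖ ≤ a k * b n) : Summable (Function.uncurry F) :=
  Summable.of_norm_bounded (ha.mul_of_nonneg hb ha0 hb0) (fun x => h x.1 x.2)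

/-- The reindexing `k ↦ k + 1` of the sums over `k ≥ -1`. -/
def kEquiv : {k : ℤ // -1 ≤ k} ≃ ℕ where
  toFun k := (k.1 + 1).toNat
  invFun n := ⟨(n : ℤ) - 1, by omega⟩
  left_inv k := by ext; have := k.2; simp; omega
  right_inv n := by simp

/-- As `n_1 > n_2 ≥ 1`, the leading variable satisfies `n_1 + α_1 ≥ 2`, so the `k`-dependence is
dominated by the binomial series at `1/2`. -/
lemma summable_update_uncurry {r : ℕ} (lam al : Fin (r + 2) → ℝ)
    (hal : ∀ i, al i ∈ Set.Ico (0 : ℝ) 1) (s : Fin (r + 2) → ℂ) (hs : s ∈ Ur (r + 2) 0) :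
    Summable (Function.uncurry fun (k : ℕ) (n : DTuple (r + 2)) => binCoeff (s 0) (k + 1) *
      lerchTerm lam al (Function.update s 0 (s 0 + k + 1)) n.1) := by
  have ha := (summable_nat_add_iff 1).2
    (summable_norm_binCoeff (s 0) (y := 1 / 2) (by norm_num [abs_of_pos]))
  refine summable_uncurry_of_le ha (summable_lerch _ lam al hal s hs) (fun _ => by positivity)
    (fun _ => norm_nonneg _) (fun k n => ?_)
  have h2 : (2 : ℝ) ≤ n.1 0 := by
    have h1 := (mem_DTuple.1 n.2).1
    have h3 := n.2.2 1
    exact_mod_cast (by omega : 2 ≤ n.1 0)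
  have hx : 2 ≤ (n.1 0 : ℝ) + al 0 := by linarith [(hal 0).1]
  rw [lerchTerm_update _ _ _ _ _ (by linarith), norm_mul, norm_mul, norm_pow, Complex.norm_real,
    Real.norm_of_nonneg (by positivity), abs_of_pos (by norm_num : (0 : ℝ) < 1 / 2), mul_assoc,
    mul_comm (‖lerchTerm lam al s n.1‖)]
  gcongr
  rw [one_div]
  exact inv_anti₀ (by norm_num) hx

/-- As `m + α_2 ≥ 1`, the `k`-dependence is dominated by the binomial series at `α_2 - α_1`, which
lies in `(-1, 1)`. -/
lemma summable_contract_uncurry {r : ℕ} (lam al : Fin (r + 2) → ℝ)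
    (hal : ∀ i, al i ∈ Set.Ico (0 : ℝ) 1) (s : Fin (r + 2) → ℂ) (hs : s ∈ Ur (r + 2) 0) :
    Summable (Function.uncurry fun (k : ℕ) (m : DTuple (r + 1)) =>
      binCoeff (s 0) k * (((al 1 - al 0) ^ k : ℝ) : ℂ) *
        lerchTerm (contractLam lam) (fun i => al i.succ) (contractArgs s k) m.1) := by
  have ha := summable_norm_binCoeff (s 0) (y := al 1 - al 0) (by
    rw [abs_lt]; constructor <;> linarith [(hal 0).1, (hal 1).1, (hal 0).2, (hal 1).2])
  refine summable_uncurry_of_le ha (summable_lerch _ (contractLam lam) (fun i => al i.succ)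
    (fun i => hal _) (contractArgs s (0 : ℕ)) (contract_mem hs 0)) (fun _ => by positivity)
    (fun _ => norm_nonneg _) (fun k m => ?_)
  have h1 : (1 : ℝ) ≤ m.1 0 := by exact_mod_cast m.2.2 0
  have hx : 1 ≤ (m.1 0 : ℝ) + al 1 := by linarith [(hal 1).1]
  rw [lerchTerm_contract _ _ _ _ _ (by linarith), norm_mul, norm_mul, norm_mul, norm_pow,
    Complex.norm_real, Complex.norm_real, norm_pow, Real.norm_eq_abs,
    Real.norm_of_nonneg (by positivity)]
  gcongr
  refine mul_le_of_le_one_right (norm_nonneg _) (pow_le_one₀ (by positivity) ?_)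
  exact inv_le_one_of_one_le₀ hx

/-! ### The identity -/

/-- **Generalised Ramanujan identity for multiple Lerch zeta functions.**
For `r ≥ 2`, `λ_i, α_i ∈ [0,1)`, `μ_2 := λ_1+λ_2` and `(s_1,…,s_r) ∈ U_r`:
all Lerch values appearing are given by absolutely convergent series, both
`k`-sums converge absolutely, and
`e(λ_1) ∑_{k≥−1} (s_1)_k (α_2−α_1)^{k+1} L_{r−1}(μ_2,λ_3,…;α_2,…;s_1+s_2+k+1,s_3,…)
 = (1−e(λ_1)) L_r(λ;α;s) + ∑_{k≥0} (s_1)_k L_r(λ;α;s_1+k+1,s_2,…)`. -/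
theorem stmt_7 (r : ℕ) (lam al : Fin (r + 2) → ℝ)
    (hlam : ∀ i, lam i ∈ Set.Ico (0 : ℝ) 1) (hal : ∀ i, al i ∈ Set.Ico (0 : ℝ) 1)
    (s : Fin (r + 2) → ℂ) (hs : s ∈ Ur (r + 2) 0) :
    (∀ k : {k : ℤ // -1 ≤ k}, Summable (fun n : DTuple (r + 1) =>
        ‖lerchTerm (contractLam lam) (fun i => al i.succ)
          (contractArgs s ((k.1 : ℂ) + 1)) n.1‖)) ∧
    Summable (fun n : DTuple (r + 2) => ‖lerchTerm lam al s n.1‖) ∧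
    (∀ k : ℕ, Summable (fun n : DTuple (r + 2) =>
        ‖lerchTerm lam al (Function.update s 0 (s 0 + (k : ℂ) + 1)) n.1‖)) ∧
    Summable (fun k : {k : ℤ // -1 ≤ k} =>
      ‖pochZ (s 0) k.1 * (((al 1 - al 0) ^ (k.1 + 1) : ℝ) : ℂ) *
        multipleLerch (contractLam lam) (fun i => al i.succ)
          (contractArgs s ((k.1 : ℂ) + 1))‖) ∧
    Summable (fun k : ℕ =>
      ‖pochZ (s 0) k * multipleLerch lam al (Function.update s 0 (s 0 + (k : ℂ) + 1))‖) ∧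
    eR (lam 0) * ∑' k : {k : ℤ // -1 ≤ k},
        pochZ (s 0) k.1 * (((al 1 - al 0) ^ (k.1 + 1) : ℝ) : ℂ) *
          multipleLerch (contractLam lam) (fun i => al i.succ)
            (contractArgs s ((k.1 : ℂ) + 1))
      = (1 - eR (lam 0)) * multipleLerch lam al s
        + ∑' k : ℕ,
            pochZ (s 0) k * multipleLerch lam al (Function.update s 0 (s 0 + (k : ℂ) + 1)) := by
  have hA := summable_update_uncurry lam al hal s hs
  have hB := summable_contract_uncurry lam al hal s hs
  have hAeq : ∀ k : ℕ, pochZ (s 0) k * multipleLerch lam al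
      (Function.update s 0 (s 0 + (k : ℂ) + 1)) = ∑' n : DTuple (r + 2),
        binCoeff (s 0) (k + 1) * lerchTerm lam al (Function.update s 0 (s 0 + k + 1)) n.1 := by
    intro k
    have : pochZ (s 0) k = binCoeff (s 0) (k + 1) := by rw [← pochZ_eq]; simp
    rw [this, multipleLerch, tsum_mul_left]
  have hBeq : ∀ k : ℕ, pochZ (s 0) (kEquiv.symm k).1 *
      (((al 1 - al 0) ^ ((kEquiv.symm k).1 + 1) : ℝ) : ℂ) *
      multipleLerch (contractLam lam) (fun i => al i.succ)
        (contractArgs s (((kEquiv.symm k).1 : ℂ) + 1)) = ∑' m : DTuple (r + 1),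
      binCoeff (s 0) k * (((al 1 - al 0) ^ k : ℝ) : ℂ) *
        lerchTerm (contractLam lam) (fun i => al i.succ) (contractArgs s k) m.1 := by
    intro k
    have e : (kEquiv.symm k).1 = (k : ℤ) - 1 := rfl
    rw [e, pochZ_eq, sub_add_cancel, zpow_natCast, multipleLerch, tsum_mul_left]
    simp
  refine ⟨fun k => ?_, summable_lerch _ _ _ hal _ hs,
    fun k => summable_lerch _ _ _ hal _ (update_mem hs k), ?_, ?_, ?_⟩
  · obtain ⟨k, rfl⟩ := kEquiv.symm.surjective k
    have e : (kEquiv.symm k).1 = (k : ℤ) - 1 := rfl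
    have := summable_lerch _ (contractLam lam) (fun i => al i.succ)
      (fun i => hal _) _ (contract_mem hs k)
    simpa [e] using this
  · rw [← kEquiv.symm.summable_iff]
    refine hB.prod.norm.congr fun k => ?_
    simp only [Function.comp_apply]
    rw [hBeq]; rfl
  · refine hA.prod.norm.congr fun k => ?_
    rw [hAeq]; rfl
  · rw [← kEquiv.symm.tsum_eq]
    simp only [hAeq, hBeq]
    -- Both double sums are now evaluated by summing over `k` first.
    rw [← hA.tsum_comm, ← hB.tsum_comm]
    have hD : Summable fun m : DTuple (r + 1) => lerchTerm lam al s (Fin.cons (m.1 0) m.1) :=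
      hB.prod_symm.prod.congr fun m => (hasSum_contract lam al hal s m).tsum_eq
    have hL : HasSum (fun n : DTuple (r + 2) => lerchTerm lam al s n.1)
        (multipleLerch lam al s) := (summable_lerch _ lam al hal _ hs).of_norm.hasSum
    have hpre : HasSum (fun p => lerchTerm lam al s (preShift p)) (multipleLerch lam al s +
        ∑' m : DTuple (r + 1), lerchTerm lam al s (Fin.cons (m.1 0) m.1)) :=
      HasSum.sum (f := fun p => lerchTerm lam al s (preShift p)) hL hD.hasSum
    have hup := (Equiv.ofBijective _ (shiftUp_bijective r)).hasSum_iff.2 hL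
    have hfin := (hpre.mul_left (eR (lam 0))).sub hup
    rw [← (Equiv.ofBijective _ (shiftUp_bijective r)).tsum_eq]
    have hterm : ∀ p : DTuple (r + 2) ⊕ DTuple (r + 1), ∑' k : ℕ, binCoeff (s 0) (k + 1) *
        lerchTerm lam al (Function.update s 0 (s 0 + k + 1)) (shiftUp p).1 =
        eR (lam 0) * lerchTerm lam al s (preShift p) - lerchTerm lam al s (shiftUp p).1 :=
      fun p => (hasSum_update lam al hal s (preShift p) (preShift_mem p).1).tsum_eq
    simp only [Equiv.ofBijective_apply, hterm]
    rw [tsum_congr fun m => (hasSum_contract lam al hal s m).tsum_eq]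
    have h := hfin.tsum_eq
    simp only [Function.comp_apply, Equiv.ofBijective_apply] at h
    rw [h]
    ring
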